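/- arXiv:1706.01281 — 3 statements merged into one kernel-verified Lean document; each statement's English description precedes it below -/
import Mathlib

section
/- Let N ≥ 1, d ≥ 2, let Ω ⊆ ℝ^N be an open set, let n₀ : Ω → S^{d-1} be a Lebesgue-measurable map, and let (ρ_k) be a sequence of mollifiers. Then there exists a Lebesgue-measurable map n : Ω → S^{d-1} with n(x) ∈ {n₀(x), −n₀(x)} for a.e. x ∈ Ω, such that liminf_{k→∞} ∬_{Ω×Ω} arccos⟪n(x), n(y)⟫ / |x−y| · ρ_k(|x−y|) dx dy ≤ 2 · liminf_{k→∞} ∬_{Ω×Ω} min( arccos⟪n₀(x), n₀(y)⟫, π − arccos⟪n₀(x), n₀(y)⟫ ) / |x−y| · ρ_k(|x−y|) dx dy, where all double integrals are Lebesgue integrals with values in [0,∞]. -/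
/-!
STATEMENT 0: Geodesic BV-lifting estimate (measurable/mollified formulation) with the
optimal constant 2: any measurable `n₀ : Ω → S^{d-1}` (representing a map into `ℝP^{d-1}`)
admits a measurable choice of signs `n` whose intrinsic Korevaar–Schoen BV-energy into
`S^{d-1}` is at most twice the intrinsic BV-energy of the unoriented map into `ℝP^{d-1}`.
-/

noncomputable section
open MeasureTheory Real Filter
open scoped ENNReal RealInnerProductSpace

/-!
Orient each line towards one random direction `e`: replace `n₀ x` by whichever of `±n₀ x` lies on
the positive side of the hyperplane with normal `e`. Two unit vectors at angle `α` lie on different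
sides with probability `α / π` (Crofton's formula), and exactly then does orienting turn their angle
`α` into `π - α`. So the expected angle of the oriented pair is
`α * (1 - α / π) + (π - α) * (α / π) = 2 * α * (π - α) / π`, which is at most
`2 * min α (π - α)`. By Tonelli and Fatou, some `e` does no worse than the average along the whole
sequence of kernels.
-/

open InnerProductGeometry ProbabilityTheory

/-! ### Sign changes of a sinusoid -/

lemma cos_nonneg_iff_abs_le_pi_div_two {x : ℝ} (hx : |x| < 3 * π / 2) :
    0 ≤ cos x ↔ |x| ≤ π / 2 := by
  rw [← cos_abs]
  constructor
  · intro h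
    by_contra! hlt
    exact h.not_gt (cos_neg_of_pi_div_two_lt_of_lt hlt (by linarith))
  · exact fun h ↦ cos_nonneg_of_neg_pi_div_two_le_of_le (by linarith [abs_nonneg x, pi_pos]) h

lemma volume_inter_Ioc_eq_of_periodic {A : Set ℝ} {T : ℝ} (hT : 0 < T) (hA : MeasurableSet A)
    (hper : Function.Periodic (· ∈ A) T) (s t : ℝ) :
    volume (A ∩ Set.Ioc s (s + T)) = volume (A ∩ Set.Ioc t (t + T)) := by
  refine (isAddFundamentalDomain_Ioc hT s volume).measure_set_eq
    (isAddFundamentalDomain_Ioc hT t volume) hA ?_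
  rintro ⟨g, hg⟩
  obtain ⟨k, rfl⟩ := AddSubgroup.mem_zmultiples_iff.1 hg
  ext x
  have hshift : (x + k • T ∈ A) = (x ∈ A) := hper.zsmul k x
  rw [Set.mem_preimage, AddSubgroup.mk_vadd, vadd_eq_add, add_comm, hshift]

lemma cos_sign_change_inter_Ioo {θ : ℝ} (h0 : 0 ≤ θ) (hπ : θ < π) :
    {τ : ℝ | ¬ (0 ≤ cos τ ↔ 0 ≤ cos (τ - θ))} ∩ Set.Ioo (-(π / 2)) (-(π / 2) + 2 * π) =
      Set.Ioo (-(π / 2)) (θ - π / 2) ∪ Set.Ioc (π / 2) (π / 2 + θ) := by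
  ext τ
  simp only [Set.mem_inter_iff, Set.mem_ofPred_eq, Set.mem_union, Set.mem_Ioo, Set.mem_Ioc]
  by_cases hτ : -(π / 2) < τ ∧ τ < -(π / 2) + 2 * π
  · have h₁ : |τ| < 3 * π / 2 := abs_lt.2 ⟨by linarith, by linarith⟩
    have h₂ : |τ - θ| < 3 * π / 2 := abs_lt.2 ⟨by linarith, by linarith⟩
    rw [cos_nonneg_iff_abs_le_pi_div_two h₁, cos_nonneg_iff_abs_le_pi_div_two h₂, abs_le, abs_le]
    grind
  · grind [pi_pos]

lemma volume_cos_sign_change {θ : ℝ} (h0 : 0 ≤ θ) (hπ : θ < π) :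
    volume ({τ : ℝ | ¬ (0 ≤ cos τ ↔ 0 ≤ cos (τ - θ))} ∩
      Set.Ioc (-(π / 2)) (-(π / 2) + 2 * π)) = ENNReal.ofReal (2 * θ) := by
  have hdisj : Disjoint (Set.Ioo (-(π / 2)) (θ - π / 2)) (Set.Ioc (π / 2) (π / 2 + θ)) :=
    Set.disjoint_left.2 fun τ h₁ h₂ ↦ by linarith [h₁.2, h₂.1]
  rw [← measure_congr ((ae_eq_refl _).inter Ioo_ae_eq_Ioc), cos_sign_change_inter_Ioo h0 hπ,
    measure_union hdisj measurableSet_Ioc, Real.volume_Ioo, Real.volume_Ioc,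
    ← ENNReal.ofReal_add (by linarith) (by linarith)]
  ring_nf

lemma exists_sinusoid_eq_mul_cos_sub {a b : ℝ} (hab : a ≠ 0 ∨ b ≠ 0) :
    ∃ r φ : ℝ, 0 < r ∧ ∀ τ, a * cos τ + b * sin τ = r * cos (τ - φ) := by
  let z : ℂ := ⟨a, b⟩
  refine ⟨‖z‖, z.arg, norm_pos_iff.2 fun hz ↦ ?_, fun τ ↦ ?_⟩
  · simp only [z, Complex.ext_iff, Complex.zero_re, Complex.zero_im] at hz
    tauto
  · have ha : ‖z‖ * cos z.arg = a := Complex.norm_mul_cos_arg z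
    have hb : ‖z‖ * sin z.arg = b := Complex.norm_mul_sin_arg z
    rw [cos_sub]
    linear_combination -cos τ * ha - sin τ * hb

lemma volume_sinusoid_sign_change {a b θ : ℝ} (hab : a ≠ 0 ∨ b ≠ 0) (h0 : 0 ≤ θ) (hπ : θ < π) :
    volume ({τ : ℝ | ¬ (0 ≤ a * cos τ + b * sin τ ↔ 0 ≤ a * cos (τ - θ) + b * sin (τ - θ))} ∩
      Set.Ioc 0 (2 * π)) = ENNReal.ofReal (2 * θ) := by
  obtain ⟨r, φ, hr, hcos⟩ := exists_sinusoid_eq_mul_cos_sub hab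
  simp only [hcos, mul_nonneg_iff_of_pos_left hr]
  set C : Set ℝ := {τ | ¬ (0 ≤ cos τ ↔ 0 ≤ cos (τ - θ))}
  have hC : MeasurableSet C := by measurability
  have hCper : Function.Periodic (· ∈ C) (2 * π) := fun τ ↦ by
    simp only [C, Set.mem_ofPred_eq, add_sub_right_comm, cos_add_two_pi]
  have hshift : {τ | ¬ (0 ≤ cos (τ - φ) ↔ 0 ≤ cos (τ - θ - φ))} ∩ Set.Ioc 0 (2 * π) =
      (fun τ ↦ τ - φ) ⁻¹' (C ∩ Set.Ioc (-φ) (-φ + 2 * π)) := by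
    ext τ
    simp only [C, Set.mem_inter_iff, Set.mem_ofPred_eq, Set.mem_preimage, Set.mem_Ioc,
      sub_right_comm τ θ φ]
    grind
  rw [hshift, (measurePreserving_sub_right volume φ).measure_preimage
      (hC.inter measurableSet_Ioc).nullMeasurableSet,
    volume_inter_Ioc_eq_of_periodic two_pi_pos hC hCper _ (-(π / 2)),
    volume_cos_sign_change h0 hπ]

section InnerProductSpace

variable {E : Type*} [NormedAddCommGroup E] [InnerProductSpace ℝ E]

/-! ### Pairs of vectors and great circles -/

lemma exists_linearIsometryEquiv_map_pair {u v u' v' : E} (hu : ‖u‖ = ‖u'‖) (hv : ‖v‖ = ‖v'‖)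
    (huv : ⟪u, v⟫ = ⟪u', v'⟫) : ∃ L : E ≃ₗᵢ[ℝ] E, L u = u' ∧ L v = v' := by
  let R : E ≃ₗᵢ[ℝ] E := (ℝ ∙ (u - u'))ᗮ.reflection
  have hRu : R u = u' := Submodule.reflection_sub hu
  let Q : E ≃ₗᵢ[ℝ] E := (ℝ ∙ (R v - v'))ᗮ.reflection
  have hQv : Q (R v) = v' := Submodule.reflection_sub (by rw [R.norm_map, hv])
  have hQu : Q u' = u' := by
    refine Submodule.reflection_mem_subspace_eq_self
      (Submodule.mem_orthogonal_singleton_iff_inner_left.2 ?_)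
    rw [inner_sub_right, ← huv, ← hRu, R.inner_map_map, sub_self]
  exact ⟨R.trans Q, by simp [hRu, hQu], by simp [hQv]⟩

/-- The great circle through the orthogonal unit vectors `p` and `q`, parametrized by arc length
from `p`. -/
def greatCircle (p q : E) (τ : ℝ) : E := cos τ • p + sin τ • q

lemma inner_greatCircle_left (p q e : E) (τ : ℝ) :
    ⟪greatCircle p q τ, e⟫ = ⟪p, e⟫ * cos τ + ⟪q, e⟫ * sin τ := by
  rw [greatCircle, inner_add_left, real_inner_smul_left, real_inner_smul_left]
  ring

lemma inner_greatCircle_greatCircle {p q : E} (hp : ‖p‖ = 1) (hq : ‖q‖ = 1) (hpq : ⟪p, q⟫ = 0)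
    (τ σ : ℝ) : ⟪greatCircle p q τ, greatCircle p q σ⟫ = cos (τ - σ) := by
  rw [inner_greatCircle_left, real_inner_comm, real_inner_comm _ q, inner_greatCircle_left,
    inner_greatCircle_left, real_inner_comm p q, real_inner_self_eq_norm_sq,
    real_inner_self_eq_norm_sq, hp, hq, hpq, cos_sub]
  ring

lemma norm_greatCircle {p q : E} (hp : ‖p‖ = 1) (hq : ‖q‖ = 1) (hpq : ⟪p, q⟫ = 0) (τ : ℝ) :
    ‖greatCircle p q τ‖ = 1 := by
  rw [norm_eq_sqrt_real_inner, inner_greatCircle_greatCircle hp hq hpq, sub_self, cos_zero,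
    sqrt_one]

lemma exists_eq_greatCircle_angle {u v : E} (hu : ‖u‖ = 1) (hv : ‖v‖ = 1)
    (h0 : 0 < angle u v) (hπ : angle u v < π) :
    ∃ w : E, ‖w‖ = 1 ∧ ⟪u, w⟫ = 0 ∧ v = greatCircle u w (angle u v) := by
  set θ := angle u v
  have hsin : 0 < sin θ := sin_pos_of_pos_of_lt_pi h0 hπ
  have huv : ⟪u, v⟫ = cos θ := inner_eq_cos_angle_of_norm_eq_one hu hv
  have hnorm : ‖v - cos θ • u‖ = sin θ := by
    rw [← sq_eq_sq₀ (norm_nonneg _) hsin.le, norm_sub_sq_real, real_inner_smul_right,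
      real_inner_comm, huv, norm_smul, hu, hv, norm_eq_abs, mul_one, sq_abs, sin_sq]
    ring
  refine ⟨(sin θ)⁻¹ • (v - cos θ • u), ?_, ?_, ?_⟩
  · rw [norm_smul, hnorm, norm_eq_abs, abs_of_pos (inv_pos.2 hsin), inv_mul_cancel₀ hsin.ne']
  · rw [real_inner_smul_right, inner_sub_right, real_inner_smul_right,
      real_inner_self_eq_norm_sq, hu, huv]
    ring
  · rw [greatCircle, smul_inv_smul₀ hsin.ne', add_sub_cancel]

/-! ### Crofton's formula -/

/-- The normals of the hyperplanes through `0` which separate `u` from `v`, where a hyperplane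
belongs to its positive side. -/
def separatingNormals (u v : E) : Set E := {e | ¬ (0 ≤ ⟪u, e⟫ ↔ 0 ≤ ⟪v, e⟫)}

lemma mem_separatingNormals {u v e : E} :
    e ∈ separatingNormals u v ↔ ¬ (0 ≤ ⟪u, e⟫ ↔ 0 ≤ ⟪v, e⟫) := Iff.rfl

lemma separatingNormals_smul_right (u v : E) {r : ℝ} (hr : 0 < r) :
    separatingNormals u (r • v) = separatingNormals u v := by
  ext e
  simp only [mem_separatingNormals, real_inner_smul_left, mul_nonneg_iff_of_pos_left hr]

lemma separatingNormals_smul_left (u v : E) {r : ℝ} (hr : 0 < r) :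
    separatingNormals (r • u) v = separatingNormals u v := by
  ext e
  simp only [mem_separatingNormals, real_inner_smul_left, mul_nonneg_iff_of_pos_left hr]

lemma separatingNormals_self (u : E) : separatingNormals u u = ∅ := by
  ext e
  simp [mem_separatingNormals]

lemma separatingNormals_neg_right (u : E) : separatingNormals u (-u) = {e | ⟪u, e⟫ = 0}ᶜ := by
  ext e
  simp only [mem_separatingNormals, inner_neg_left, Set.mem_compl_iff, Set.mem_ofPred_eq]
  grind

lemma preimage_separatingNormals (L : E ≃ₗᵢ[ℝ] E) (u v : E) :
    L ⁻¹' separatingNormals (L u) (L v) = separatingNormals u v := by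
  ext e
  simp only [Set.mem_preimage, mem_separatingNormals, L.inner_map_map]

/-- The representative of `±u` on the nonnegative side of the hyperplane with normal `e`; if `u`
lies on that hyperplane, the representative is `u` itself. -/
def orient (e u : E) : E := open Classical in if 0 ≤ ⟪u, e⟫ then u else -u

lemma orient_eq_or_eq_neg (e u : E) : orient e u = u ∨ orient e u = -u := ite_eq_or_eq _ _ _

lemma angle_orient_of_mem {u v e : E} (he : e ∈ separatingNormals u v) :
    angle (orient e u) (orient e v) = π - angle u v := by
  rw [mem_separatingNormals] at he
  by_cases h : 0 ≤ ⟪u, e⟫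
  · rw [orient, orient, if_pos h, if_neg (by tauto), angle_neg_right]
  · rw [orient, orient, if_neg h, if_pos (by tauto), angle_neg_left]

lemma angle_orient_of_notMem {u v e : E} (he : e ∉ separatingNormals u v) :
    angle (orient e u) (orient e v) = angle u v := by
  rw [mem_separatingNormals, not_not] at he
  by_cases h : 0 ≤ ⟪u, e⟫
  · rw [orient, orient, if_pos h, if_pos (he.1 h)]
  · rw [orient, orient, if_neg h, if_neg (mt he.2 h), angle_neg_neg]

/-- The angle between the lines `ℝu` and `ℝv`, that is, the geodesic distance of their classes in
projective space. -/
def lineAngle (u v : E) : ℝ := min (angle u v) (π - angle u v)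

variable [MeasurableSpace E] [BorelSpace E]

lemma measurableSet_separatingNormals (u v : E) : MeasurableSet (separatingNormals u v) := by
  have hhalf : ∀ w : E, MeasurableSet {e : E | 0 ≤ ⟪w, e⟫} := fun w ↦
    measurableSet_le measurable_const (by fun_prop)
  exact ((hhalf u).iff (hhalf v)).compl

section Crofton

variable {μ : Measure E}

lemma measure_separatingNormals_eq_of_inner_eq (hinv : ∀ L : E ≃ₗᵢ[ℝ] E, MeasurePreserving L μ μ)
    {u v u' v' : E} (hu : ‖u‖ = ‖u'‖) (hv : ‖v‖ = ‖v'‖) (huv : ⟪u, v⟫ = ⟪u', v'⟫) :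
    μ (separatingNormals u' v') = μ (separatingNormals u v) := by
  obtain ⟨L, rfl, rfl⟩ := exists_linearIsometryEquiv_map_pair hu hv huv
  rw [← preimage_separatingNormals L u v,
    (hinv L).measure_preimage (measurableSet_separatingNormals _ _).nullMeasurableSet]

lemma measure_separatingNormals_greatCircle (hinv : ∀ L : E ≃ₗᵢ[ℝ] E, MeasurePreserving L μ μ)
    {p q : E} (hp : ‖p‖ = 1) (hq : ‖q‖ = 1) (hpq : ⟪p, q⟫ = 0) (τ θ : ℝ) :
    μ (separatingNormals (greatCircle p q τ) (greatCircle p q (τ - θ))) =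
      μ (separatingNormals p (greatCircle p q θ)) := by
  have hnorm : ∀ σ, ‖greatCircle p q σ‖ = 1 := norm_greatCircle hp hq hpq
  refine measure_separatingNormals_eq_of_inner_eq hinv (by rw [hp, hnorm]) (by rw [hnorm, hnorm]) ?_
  rw [inner_greatCircle_greatCircle hp hq hpq, sub_sub_cancel, real_inner_comm,
    inner_greatCircle_left, real_inner_self_eq_norm_sq, hp, real_inner_comm, hpq]
  ring

variable [SecondCountableTopology E]

lemma measurableSet_setOf_mem_separatingNormals_greatCircle (p q : E) (θ : ℝ) :
    MeasurableSet {x : ℝ × E |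
      x.2 ∈ separatingNormals (greatCircle p q x.1) (greatCircle p q (x.1 - θ))} := by
  have hhalf : ∀ σ, MeasurableSet {x : ℝ × E | 0 ≤ ⟪greatCircle p q (x.1 - σ), x.2⟫} := fun σ ↦
    (isClosed_le continuous_const (by unfold greatCircle; fun_prop)).measurableSet
  simpa only [sub_zero] using! ((hhalf 0).iff (hhalf θ)).compl

variable [IsProbabilityMeasure μ]

/-- Rotating the pair along its great circle does not change the measure, so it may be averaged over
a full turn; by Tonelli, what is averaged is then the time a sinusoid and its translate by `θ`
spend with different signs. -/
lemma two_pi_mul_measure_separatingNormals_greatCircle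
    (hinv : ∀ L : E ≃ₗᵢ[ℝ] E, MeasurePreserving L μ μ) {p q : E}
    (hnull : μ {e | ⟪p, e⟫ = 0} = 0) (hp : ‖p‖ = 1) (hq : ‖q‖ = 1) (hpq : ⟪p, q⟫ = 0)
    {θ : ℝ} (h0 : 0 ≤ θ) (hπ : θ < π) :
    ENNReal.ofReal (2 * π) * μ (separatingNormals p (greatCircle p q θ)) =
      ENNReal.ofReal (2 * θ) := by
  set P : Set (ℝ × E) :=
    {x | x.2 ∈ separatingNormals (greatCircle p q x.1) (greatCircle p q (x.1 - θ))}
  have hP : MeasurableSet P := measurableSet_setOf_mem_separatingNormals_greatCircle p q θ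
  have hslice : ∀ᵐ e ∂μ, volume.restrict (Set.Ioc 0 (2 * π)) ((fun τ ↦ (τ, e)) ⁻¹' P) =
      ENNReal.ofReal (2 * θ) := by
    filter_upwards [measure_eq_zero_iff_ae_notMem.1 hnull] with e he
    rw [Measure.restrict_apply (measurable_prodMk_right hP),
      ← volume_sinusoid_sign_change (.inl he : ⟪p, e⟫ ≠ 0 ∨ ⟪q, e⟫ ≠ 0) h0 hπ]
    simp only [P, mem_separatingNormals, inner_greatCircle_left, Set.preimage_ofPred_eq]
  calc ENNReal.ofReal (2 * π) * μ (separatingNormals p (greatCircle p q θ))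
      = ∫⁻ τ in Set.Ioc 0 (2 * π), μ (Prod.mk τ ⁻¹' P) := by
        simp only [P, Set.preimage_ofPred_eq, Set.ofPred_mem_eq,
          measure_separatingNormals_greatCircle hinv hp hq hpq, setLIntegral_const,
          Real.volume_Ioc, sub_zero, mul_comm]
    _ = ∫⁻ e, volume.restrict (Set.Ioc 0 (2 * π)) ((fun τ ↦ (τ, e)) ⁻¹' P) ∂μ := by
        rw [← Measure.prod_apply hP, Measure.prod_apply_symm hP]
    _ = ENNReal.ofReal (2 * θ) := by
        rw [lintegral_congr_ae hslice, lintegral_const, measure_univ, mul_one]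

theorem measure_separatingNormals (hinv : ∀ L : E ≃ₗᵢ[ℝ] E, MeasurePreserving L μ μ) {u v : E}
    (hnull : μ {e | ⟪u, e⟫ = 0} = 0) (hv : v ≠ 0) :
    μ (separatingNormals u v) = ENNReal.ofReal (angle u v / π) := by
  have hu : u ≠ 0 := by
    rintro rfl
    simp at hnull
  rcases (angle_nonneg u v).eq_or_lt with h0 | h0
  · obtain ⟨-, r, hr, rfl⟩ := angle_eq_zero_iff.1 h0.symm
    rw [separatingNormals_smul_right u u hr, separatingNormals_self, ← h0]
    simp
  rcases (angle_le_pi u v).eq_or_lt with hπ | hπ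
  · obtain ⟨-, r, hr, rfl⟩ := angle_eq_pi_iff.1 hπ
    rw [← neg_smul_neg, separatingNormals_smul_right u (-u) (neg_pos.2 hr),
      separatingNormals_neg_right, prob_compl_eq_one_iff₀ ?_ |>.2 hnull, neg_smul_neg, hπ,
      div_self pi_ne_zero, ENNReal.ofReal_one]
    exact .of_null hnull
  have hu' : 0 < ‖u‖⁻¹ := inv_pos.2 (norm_pos_iff.2 hu)
  have hv' : 0 < ‖v‖⁻¹ := inv_pos.2 (norm_pos_iff.2 hv)
  have hangle : angle (‖u‖⁻¹ • u) (‖v‖⁻¹ • v) = angle u v := by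
    rw [angle_smul_left_of_pos _ _ hu', angle_smul_right_of_pos _ _ hv']
  have hu1 : ‖‖u‖⁻¹ • u‖ = 1 := norm_smul_inv_norm (𝕜 := ℝ) hu
  have hv1 : ‖‖v‖⁻¹ • v‖ = 1 := norm_smul_inv_norm (𝕜 := ℝ) hv
  obtain ⟨q, hq, huq, hvq⟩ := exists_eq_greatCircle_angle hu1 hv1 (h0.trans_eq hangle.symm)
    (hangle.trans_lt hπ)
  have hturn := two_pi_mul_measure_separatingNormals_greatCircle hinv
    (by simpa [real_inner_smul_left, hu] using hnull) hu1 hq huq h0.le hπ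
  rw [hangle] at hvq
  rw [← hvq, separatingNormals_smul_left _ _ hu', separatingNormals_smul_right _ _ hv'] at hturn
  rw [← mul_div_mul_left _ _ two_ne_zero, ENNReal.ofReal_div_of_pos two_pi_pos,
    ENNReal.eq_div_iff (by simp [pi_pos]) ENNReal.ofReal_ne_top, hturn]

end Crofton

/-! ### Random orientations -/

lemma measurable_orient [SecondCountableTopology E] :
    Measurable fun p : E × E ↦ orient p.1 p.2 :=
  Measurable.ite (measurableSet_le measurable_const (by fun_prop)) (by fun_prop) (by fun_prop)

lemma measurable_angle_orient [SecondCountableTopology E] :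
    Measurable fun p : E × E × E ↦ angle (orient p.1 p.2.1) (orient p.1 p.2.2) := by
  have hleft : Measurable fun p : E × E × E ↦ orient p.1 p.2.1 :=
    measurable_orient.comp (measurable_fst.prodMk (by fun_prop))
  have hright : Measurable fun p : E × E × E ↦ orient p.1 p.2.2 :=
    measurable_orient.comp (measurable_fst.prodMk (by fun_prop))
  exact continuous_arccos.measurable.comp
    ((hleft.inner hright).div (hleft.norm.mul hright.norm))

section ExpectedAngle

variable [SecondCountableTopology E] {μ : Measure E} [IsProbabilityMeasure μ]

theorem lintegral_angle_orient (hinv : ∀ L : E ≃ₗᵢ[ℝ] E, MeasurePreserving L μ μ) {u v : E}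
    (hnull : μ {e | ⟪u, e⟫ = 0} = 0) (hv : v ≠ 0) :
    ∫⁻ e, ENNReal.ofReal (angle (orient e u) (orient e v)) ∂μ =
      ENNReal.ofReal (2 * (angle u v * (π - angle u v) / π)) := by
  set α := angle u v
  have hα0 : 0 ≤ α := angle_nonneg u v
  have hαπ : 0 ≤ π - α := sub_nonneg.2 (angle_le_pi u v)
  have hS : MeasurableSet (separatingNormals u v) := measurableSet_separatingNormals u v
  have hμS : μ (separatingNormals u v) = ENNReal.ofReal (α / π) :=
    measure_separatingNormals hinv hnull hv
  have hμSc : μ (separatingNormals u v)ᶜ = ENNReal.ofReal ((π - α) / π) := by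
    rw [prob_compl_eq_one_sub hS, hμS, ← ENNReal.ofReal_one, ← ENNReal.ofReal_sub _ (by positivity),
      sub_div, div_self pi_ne_zero]
  rw [← lintegral_add_compl _ hS,
    setLIntegral_congr_fun hS fun e he ↦ congrArg ENNReal.ofReal (angle_orient_of_mem he),
    setLIntegral_congr_fun hS.compl fun e he ↦
      congrArg ENNReal.ofReal (angle_orient_of_notMem he),
    setLIntegral_const, setLIntegral_const, hμS, hμSc, ← ENNReal.ofReal_mul hαπ,
    ← ENNReal.ofReal_mul hα0, ← ENNReal.ofReal_add (by positivity) (by positivity)]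
  ring_nf

theorem lintegral_angle_orient_le (hinv : ∀ L : E ≃ₗᵢ[ℝ] E, MeasurePreserving L μ μ) {u v : E}
    (hnull : μ {e | ⟪u, e⟫ = 0} = 0) (hv : v ≠ 0) :
    ∫⁻ e, ENNReal.ofReal (angle (orient e u) (orient e v)) ∂μ ≤
      2 * ENNReal.ofReal (lineAngle u v) := by
  rw [lintegral_angle_orient hinv hnull hv, ENNReal.ofReal_mul zero_le_two,
    ENNReal.ofReal_ofNat]
  gcongr
  have hα0 : 0 ≤ angle u v := angle_nonneg u v
  have hαπ : angle u v ≤ π := angle_le_pi u v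
  refine le_min ?_ ?_ <;> rw [div_le_iff₀ pi_pos] <;> nlinarith

end ExpectedAngle

/-! ### Energies and their averages -/

lemma exists_liminf_le_liminf_lintegral {α : Type*} [MeasurableSpace α] {μ : Measure α}
    [IsProbabilityMeasure μ] {f : ℕ → α → ℝ≥0∞} (hf : ∀ k, Measurable (f k)) :
    ∃ a, liminf (fun k ↦ f k a) atTop ≤ liminf (fun k ↦ ∫⁻ a, f k a ∂μ) atTop := by
  obtain ⟨a, ha⟩ := exists_le_lintegral (μ := μ) (Measurable.liminf hf).aemeasurable
  exact ⟨a, ha.trans (lintegral_liminf_le hf)⟩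

lemma lintegral_lintegral_lintegral_swap {Z X Y : Type*} [MeasurableSpace Z] [MeasurableSpace X]
    [MeasurableSpace Y] {μ : Measure Z} {ν : Measure X} {η : Measure Y} [SFinite μ] [SFinite ν]
    [SFinite η] {F : Z → X → Y → ℝ≥0∞} (hF : Measurable fun p : Z × X × Y ↦ F p.1 p.2.1 p.2.2) :
    ∫⁻ z, ∫⁻ x, ∫⁻ y, F z x y ∂η ∂ν ∂μ = ∫⁻ x, ∫⁻ y, ∫⁻ z, F z x y ∂μ ∂η ∂ν := by
  have hinner : Measurable fun p : Z × X ↦ ∫⁻ y, F p.1 p.2 y ∂η :=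
    Measurable.lintegral_prod_right'
      (f := fun q : (Z × X) × Y ↦ F q.1.1 q.1.2 q.2) (by fun_prop)
  rw [lintegral_lintegral_swap hinner.aemeasurable]
  refine lintegral_congr fun x ↦ lintegral_lintegral_swap (Measurable.aemeasurable ?_)
  exact hF.comp (measurable_fst.prodMk (measurable_const.prodMk measurable_snd))

section Energy

variable {X : Type*} [MeasurableSpace X]

/-- The nonlocal energy of a vector field `n`, weighted by the kernel `w`, in which a pair of values
costs its angle; for unit fields this is the geodesic distance on the sphere. -/
def sphereEnergy (ν : Measure X) (w : X → X → ℝ≥0∞) (n : X → E) : ℝ≥0∞ :=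
  ∫⁻ x, ∫⁻ y, ENNReal.ofReal (angle (n x) (n y)) * w x y ∂ν ∂ν

/-- The nonlocal energy of the field of lines `ℝ n(x)`, weighted by the kernel `w`, in which a pair
of lines costs its geodesic distance in projective space. -/
def projectiveEnergy (ν : Measure X) (w : X → X → ℝ≥0∞) (n : X → E) : ℝ≥0∞ :=
  ∫⁻ x, ∫⁻ y, ENNReal.ofReal (lineAngle (n x) (n y)) * w x y ∂ν ∂ν

variable [SecondCountableTopology E] {ν : Measure X} [SFinite ν] {w : X → X → ℝ≥0∞} {n : X → E}

lemma measurable_angle_orient_mul (hn : Measurable n) (hw : Measurable (Function.uncurry w)) :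
    Measurable fun p : E × X × X ↦
      ENNReal.ofReal (angle (orient p.1 (n p.2.1)) (orient p.1 (n p.2.2))) * w p.2.1 p.2.2 := by
  have hargs : Measurable fun p : E × X × X ↦ (p.1, n p.2.1, n p.2.2) := by fun_prop
  exact (measurable_angle_orient.comp hargs).ennreal_ofReal.mul (hw.comp measurable_snd)

lemma measurable_sphereEnergy_orient (hn : Measurable n) (hw : Measurable (Function.uncurry w)) :
    Measurable fun e : E ↦ sphereEnergy ν w fun x ↦ orient e (n x) := by
  have hinner : Measurable fun p : E × X ↦
      ∫⁻ y, ENNReal.ofReal (angle (orient p.1 (n p.2)) (orient p.1 (n y))) * w p.2 y ∂ν :=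
    ((measurable_angle_orient_mul hn hw).comp MeasurableEquiv.prodAssoc.measurable)
      |>.lintegral_prod_right'
  exact hinner.lintegral_prod_right'

theorem lintegral_sphereEnergy_orient_le {μ : Measure E} [IsProbabilityMeasure μ]
    (hinv : ∀ L : E ≃ₗᵢ[ℝ] E, MeasurePreserving L μ μ)
    (hnull : ∀ u : E, u ≠ 0 → μ {e | ⟪u, e⟫ = 0} = 0)
    (hn : Measurable n) (hn0 : ∀ x, n x ≠ 0) (hw : Measurable (Function.uncurry w)) :
    ∫⁻ e, sphereEnergy ν w (fun x ↦ orient e (n x)) ∂μ ≤ 2 * projectiveEnergy ν w n := by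
  have hmeas : ∀ x y, Measurable fun e : E ↦
      ENNReal.ofReal (angle (orient e (n x)) (orient e (n y))) := fun x y ↦
    (measurable_angle_orient.comp (measurable_prodMk_right (y := (n x, n y)))).ennreal_ofReal
  unfold sphereEnergy projectiveEnergy
  rw [lintegral_lintegral_lintegral_swap (measurable_angle_orient_mul hn hw),
    ← lintegral_const_mul' _ _ ENNReal.ofNat_ne_top]
  refine lintegral_mono fun x ↦ ?_
  rw [← lintegral_const_mul' _ _ ENNReal.ofNat_ne_top]
  refine lintegral_mono fun y ↦ ?_
  rw [lintegral_mul_const _ (hmeas x y), ← mul_assoc]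
  gcongr
  exact lintegral_angle_orient_le hinv (hnull _ (hn0 x)) (hn0 y)

end Energy

/-! ### The Gaussian direction -/

section Gaussian

variable [FiniteDimensional ℝ E]

lemma measurePreserving_stdGaussian (L : E ≃ₗᵢ[ℝ] E) :
    MeasurePreserving L (stdGaussian E) (stdGaussian E) :=
  ⟨L.continuous.measurable, stdGaussian_map L⟩

lemma stdGaussian_hyperplane {u : E} (hu : u ≠ 0) : stdGaussian E {e | ⟪u, e⟫ = 0} = 0 := by
  have hvar : (‖innerSL ℝ u‖ ^ 2).toNNReal ≠ 0 := by simpa using hu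
  have hmap : (stdGaussian E).map (innerSL ℝ u) = gaussianReal 0 (‖innerSL ℝ u‖ ^ 2).toNNReal := by
    rw [IsGaussian.map_eq_gaussianReal, integral_strongDual_stdGaussian,
      variance_dual_stdGaussian]
  have := nullSingletonClass_gaussianReal (μ := 0) hvar
  calc stdGaussian E {e | ⟪u, e⟫ = 0} = (stdGaussian E).map (innerSL ℝ u) {0} := by
        rw [Measure.map_apply (by fun_prop) (measurableSet_singleton 0)]
        rfl
    _ = 0 := by rw [hmap, measure_singleton]

theorem geodesic_lifting_estimate_general {X : Type*} [MeasurableSpace X] (ν : Measure X)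
    [SFinite ν] {n₀ : X → E} (hn₀meas : Measurable n₀) (hn₀ : ∀ x, n₀ x ≠ 0)
    {w : ℕ → X → X → ℝ≥0∞} (hw : ∀ k, Measurable (Function.uncurry (w k))) :
    ∃ n : X → E, Measurable n ∧ (∀ x, n x = n₀ x ∨ n x = -n₀ x) ∧
      liminf (fun k ↦ sphereEnergy ν (w k) n) atTop ≤
        2 * liminf (fun k ↦ projectiveEnergy ν (w k) n₀) atTop := by
  obtain ⟨e, he⟩ := exists_liminf_le_liminf_lintegral (μ := stdGaussian E) fun k ↦
    measurable_sphereEnergy_orient (ν := ν) hn₀meas (hw k)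
  refine ⟨fun x ↦ orient e (n₀ x), measurable_orient.comp (measurable_const.prodMk hn₀meas),
    fun x ↦ orient_eq_or_eq_neg e (n₀ x), he.trans ?_⟩
  rw [← ENNReal.liminf_const_mul_of_ne_top ENNReal.ofNat_ne_top]
  exact liminf_le_liminf (.of_forall fun k ↦ lintegral_sphereEnergy_orient_le
    measurePreserving_stdGaussian (fun _ ↦ stdGaussian_hyperplane) hn₀meas hn₀ (hw k))

end Gaussian

end InnerProductSpace

lemma ofReal_div_mul_eq_ofReal_mul_ofReal {a : ℝ} (ha : 0 ≤ a) (r s : ℝ) :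
    ENNReal.ofReal (a / r * s) = ENNReal.ofReal a * ENNReal.ofReal (s / r) := by
  rw [← ENNReal.ofReal_mul ha, div_mul_eq_mul_div, mul_div_assoc]

theorem geodesic_lifting_estimate
    (N d : ℕ) (hN : 1 ≤ N) (hd : 2 ≤ d)
    (Ω : Set (EuclideanSpace ℝ (Fin N))) (hΩ : IsOpen Ω)
    (n₀ : EuclideanSpace ℝ (Fin N) → EuclideanSpace ℝ (Fin d))
    (hn₀meas : Measurable n₀) (hn₀sph : ∀ x, ‖n₀ x‖ = 1)
    (ρ : ℕ → ℝ → ℝ) (hρmeas : ∀ k, Measurable (ρ k))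
    (hρnonneg : ∀ k, ∀ r > (0 : ℝ), 0 ≤ ρ k r)
    (hρint : ∀ k, ∫⁻ x : EuclideanSpace ℝ (Fin N), ENNReal.ofReal (ρ k ‖x‖) = 1)
    (hρconc : ∀ h > (0 : ℝ), Tendsto
      (fun k => ∫⁻ x in {x : EuclideanSpace ℝ (Fin N) | h < ‖x‖}, ENNReal.ofReal (ρ k ‖x‖))
      atTop (nhds 0)) :
    ∃ n : EuclideanSpace ℝ (Fin N) → EuclideanSpace ℝ (Fin d),
      Measurable n ∧ (∀ x, ‖n x‖ = 1) ∧
      (∀ᵐ x ∂(volume.restrict Ω), n x = n₀ x ∨ n x = -n₀ x) ∧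
      liminf (fun k => ∫⁻ x in Ω, ∫⁻ y in Ω,
          ENNReal.ofReal (Real.arccos ⟪n x, n y⟫ / ‖x - y‖ * ρ k ‖x - y‖)) atTop ≤
      2 * liminf (fun k => ∫⁻ x in Ω, ∫⁻ y in Ω,
          ENNReal.ofReal (min (Real.arccos ⟪n₀ x, n₀ y⟫)
            (π - Real.arccos ⟪n₀ x, n₀ y⟫) / ‖x - y‖ * ρ k ‖x - y‖)) atTop := by
  let w : ℕ → EuclideanSpace ℝ (Fin N) → EuclideanSpace ℝ (Fin N) → ℝ≥0∞ :=
    fun k x y ↦ ENNReal.ofReal (ρ k ‖x - y‖ / ‖x - y‖)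
  obtain ⟨n, hn, hsign, hle⟩ := geodesic_lifting_estimate_general (w := w) (volume.restrict Ω)
    hn₀meas (fun x ↦ norm_ne_zero_iff.1 (by simp [hn₀sph])) (fun k ↦ by fun_prop)
  have hnorm : ∀ x, ‖n x‖ = 1 := fun x ↦ by rcases hsign x with h | h <;> simp [h, hn₀sph]
  refine ⟨n, hn, hnorm, .of_forall hsign, ?_⟩
  simpa only [sphereEnergy, projectiveEnergy, w, lineAngle, angle, hnorm, hn₀sph, mul_one, div_one,
    ofReal_div_mul_eq_ofReal_mul_ofReal (arccos_nonneg _),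
    ofReal_div_mul_eq_ofReal_mul_ofReal
      (le_min (arccos_nonneg _) (sub_nonneg.2 (arccos_le_pi _)))] using hle
end
end

section
/- Let d ≥ 2 and let I ⊆ ℝ be an open interval. Let m : ℝ → S^{d-1} and suppose V := sup { Σ_{i=0}^{k-1} min( arccos⟪m(t_{i+1}), m(t_i)⟫, π − arccos⟪m(t_{i+1}), m(t_i)⟫ ) : k ∈ ℕ, t_0 ≤ t_1 ≤ … ≤ t_k, all t_i ∈ I } < ∞. Then there exists n : ℝ → S^{d-1} with n(t) ∈ {m(t), −m(t)} for all t ∈ I, such that sup { Σ_{i=0}^{k-1} arccos⟪n(t_{i+1}), n(t_i)⟫ : k ∈ ℕ, t_0 ≤ t_1 ≤ … ≤ t_k, all t_i ∈ I } ≤ V. -/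
/-!
STATEMENT 2: One-dimensional geodesic lifting with the optimal constant 1: on an open
interval `I ⊆ ℝ`, a map of bounded (geodesic) pointwise variation into `ℝP^{d-1}`,
represented by an orientation `m : ℝ → S^{d-1}`, admits a choice of signs `n` whose
geodesic pointwise variation on `I` does not exceed that of the unoriented map.
-/

noncomputable section
open Real
open scoped ENNReal RealInnerProductSpace

/-!
A point of `ℝP^{d-1}` is the antipodal pair `{x, -x}` of a unit vector, and the geodesic distance of
`ℝP^{d-1}` is the Hausdorff distance between such pairs. A lifting is thus a selection of a
compact-valued map, and it suffices to find a selection whose variation does not exceed the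
variation of that map in the Hausdorff distance. Over a finite set of times, follow the map
greedily: at each new time pick a point of the next compact set nearest to the current one. Over
an arbitrary set, Tychonoff's theorem glues these finite selections, since the variation is lower
semicontinuous under pointwise convergence.
-/

open Set Metric TopologicalSpace

section Variation

variable {α X : Type*} [LinearOrder α] [PseudoEMetricSpace X]

lemma eVariationOn_eq_iSup_monotone (f : α → X) (s : Set α) :
    eVariationOn f s = ⨆ (k : ℕ) (t : ℕ → α) (_ : Monotone t) (_ : ∀ i ≤ k, t i ∈ s),
      ∑ i ∈ Finset.range k, edist (f (t (i + 1))) (f (t i)) := by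
  apply le_antisymm
  · exact iSup_le fun ⟨k, t, ht, hts⟩ ↦ le_iSup_of_le k <| le_iSup_of_le t <|
      le_iSup_of_le ht <| le_iSup_of_le (fun i _ ↦ hts i) le_rfl
  · exact iSup_le fun _ ↦ iSup_le fun _ ↦ iSup_le fun ht ↦ iSup_le fun hts ↦
      eVariationOn.sum_le_of_monotoneOn_Iic (ht.monotoneOn _) hts

lemma eVariationOn_insert_of_isGreatest (f : α → X) {s : Set α} {a b : α} (hb : IsGreatest s b)
    (hba : b ≤ a) : eVariationOn f (insert a s) = eVariationOn f s + edist (f b) (f a) := by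
  rw [← union_singleton, eVariationOn.union' f hb isLeast_singleton hba,
    eVariationOn.subsingleton f subsingleton_singleton, add_zero]

lemma eVariationOn_le_of_forall_finset_subset {f : α → X} {s : Set α} {V : ℝ≥0∞}
    (h : ∀ F : Finset α, ↑F ⊆ s → eVariationOn f F ≤ V) : eVariationOn f s ≤ V := by
  refine iSup_le fun ⟨k, t, ht, hts⟩ ↦ ?_
  have hF : ((Finset.Iic k).image t : Set α) ⊆ s := by
    rw [Finset.coe_image, image_subset_iff]
    exact fun i _ ↦ hts i
  simpa [eVariationOn.image_range_of_monotone f ht, edist_comm] using h _ hF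

lemma isClosed_setOf_eVariationOn_le (s : Set α) (V : ℝ≥0∞) :
    IsClosed {f : α → X | eVariationOn f s ≤ V} := by
  have hlsc : LowerSemicontinuous fun f : α → X ↦ eVariationOn f s := fun f _ ↦
    eVariationOn.lowerSemicontinuous_aux fun x _ ↦ (continuous_apply x).tendsto f
  exact hlsc.isClosed_preimage V

end Variation

section Selection

variable {α X : Type*} [LinearOrder α] [EMetricSpace X]

lemma exists_mem_edist_le_edist {K L : NonemptyCompacts X} {x : X} (hx : x ∈ K) :
    ∃ y ∈ L, edist x y ≤ edist K L := by
  obtain ⟨y, hy, hxy⟩ := L.isCompact.exists_infEDist_eq_edist L.nonempty x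
  exact ⟨y, hy, hxy ▸ infEDist_le_hausdorffEDist_of_mem hx⟩

lemma exists_selection_eVariationOn_finset_le (K : α → NonemptyCompacts X) (F : Finset α) :
    ∃ g : α → X, (∀ t, g t ∈ K t) ∧ eVariationOn g F ≤ eVariationOn K F := by
  induction F using Finset.induction_on_max with
  | empty =>
    choose g hg using fun t ↦ (K t).nonempty
    exact ⟨g, hg, by simp⟩
  | insert a F ha ih =>
    obtain ⟨g, hgK, hgF⟩ := ih
    rcases F.eq_empty_or_nonempty with rfl | hF
    · exact ⟨g, hgK, by simp⟩
    set b := F.max' hF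
    have hb : IsGreatest (F : Set α) b := F.isGreatest_max' hF
    have hba : b < a := ha b hb.1
    obtain ⟨v, hv, hbv⟩ := exists_mem_edist_le_edist (L := K a) (hgK b)
    have hgv : EqOn (Function.update g a v) g F := fun t ht ↦
      Function.update_of_ne (ha t ht).ne _ _
    refine ⟨Function.update g a v, ?_, ?_⟩
    · simpa [Function.forall_update_iff g fun t y ↦ y ∈ K t, hv] using fun t _ ↦ hgK t
    · rw [Finset.coe_insert, eVariationOn_insert_of_isGreatest _ hb hba.le,
        eVariationOn_insert_of_isGreatest _ hb hba.le, eVariationOn.congr hgv, hgv hb.1,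
        Function.update_self]
      exact add_le_add hgF hbv

theorem exists_selection_eVariationOn_le (K : α → NonemptyCompacts X) (s : Set α) :
    ∃ g : α → X, (∀ t, g t ∈ K t) ∧ eVariationOn g s ≤ eVariationOn K s := by
  let C (F : {F : Finset α // ↑F ⊆ s}) : Set (α → X) := {g | eVariationOn g F.1 ≤ eVariationOn K s}
  have hKcompact : IsCompact (univ.pi fun t ↦ (K t : Set X)) :=
    isCompact_univ_pi fun t ↦ (K t).isCompact
  have hfinite (u : Finset {F : Finset α // ↑F ⊆ s}) :
      ((univ.pi fun t ↦ (K t : Set X)) ∩ ⋂ F ∈ u, C F).Nonempty := by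
    obtain ⟨g, hgK, hg⟩ := exists_selection_eVariationOn_finset_le K (u.sup Subtype.val)
    refine ⟨g, fun t _ ↦ hgK t, mem_iInter₂.2 fun F hF ↦ ?_⟩
    calc eVariationOn g F.1
      _ ≤ eVariationOn g (u.sup Subtype.val : Finset α) :=
        eVariationOn.mono g <| Finset.coe_subset.2 <| Finset.le_sup (f := Subtype.val) hF
      _ ≤ eVariationOn K (u.sup Subtype.val : Finset α) := hg
      _ ≤ eVariationOn K s := eVariationOn.mono K fun t ht ↦ by
        obtain ⟨G, -, htG⟩ := Finset.mem_sup.1 (Finset.mem_coe.1 ht)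
        exact G.2 htG
  obtain ⟨g, hgK, hgC⟩ := hKcompact.inter_iInter_nonempty C
    (fun F ↦ isClosed_setOf_eVariationOn_le (F.1 : Set α) (eVariationOn K s)) hfinite
  exact ⟨g, fun t ↦ hgK t (mem_univ t),
    eVariationOn_le_of_forall_finset_subset fun F hF ↦ mem_iInter.1 hgC ⟨F, hF⟩⟩

end Selection

/-- The unit sphere of `E` with its geodesic distance. This is not the subtype `Metric.sphere 0 1`,
which carries the chordal distance. -/
@[ext]
structure GeodesicSphere (E : Type*) [NormedAddCommGroup E] where
  val : E
  norm_val : ‖val‖ = 1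

namespace GeodesicSphere

variable {E : Type*} [NormedAddCommGroup E]

instance : InvolutiveNeg (GeodesicSphere E) where
  neg x := ⟨-x.val, by rw [norm_neg, x.norm_val]⟩
  neg_neg x := GeodesicSphere.ext (neg_neg x.val)

variable [InnerProductSpace ℝ E]

instance : MetricSpace (GeodesicSphere E) where
  dist x y := InnerProductGeometry.angle x.val y.val
  dist_self x := InnerProductGeometry.angle_self (norm_ne_zero_iff.1 (by simp [x.norm_val]))
  dist_comm x y := InnerProductGeometry.angle_comm x.val y.val
  dist_triangle x y z := InnerProductGeometry.angle_le_angle_add_angle x.val y.val z.val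
  eq_of_dist_eq_zero {x y} h := by
    ext
    have hinner := InnerProductGeometry.inner_eq_mul_norm_of_angle_eq_zero h
    rw [x.norm_val, y.norm_val, mul_one] at hinner
    exact (inner_eq_one_iff_of_norm_eq_one x.norm_val y.norm_val).1 hinner

lemma dist_eq_arccos_inner (x y : GeodesicSphere E) : dist x y = arccos ⟪x.val, y.val⟫ := by
  change arccos (⟪x.val, y.val⟫ / (‖x.val‖ * ‖y.val‖)) = _
  rw [x.norm_val, y.norm_val, mul_one, div_one]

lemma dist_neg_right (x y : GeodesicSphere E) : dist x (-y) = π - dist x y :=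
  InnerProductGeometry.angle_neg_right x.val y.val

lemma edist_neg_left (x y : GeodesicSphere E) : edist (-x) y = edist x (-y) := by
  rw [edist_comm, edist_dist, edist_dist, dist_neg_right, dist_neg_right, dist_comm]

/-- The pair `{x, -x}`, that is, the point of the projective space `S / {±1}` represented by `x`.
As an element of `NonemptyCompacts` it carries the Hausdorff distance, which on these pairs is the
geodesic distance of the projective space. -/
def antipodalPair (x : GeodesicSphere E) : NonemptyCompacts (GeodesicSphere E) := {x} ⊔ {-x}

lemma coe_antipodalPair (x : GeodesicSphere E) :
    (x.antipodalPair : Set (GeodesicSphere E)) = {x} ∪ {-x} := rfl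

lemma mem_antipodalPair {x y : GeodesicSphere E} : y ∈ x.antipodalPair ↔ y = x ∨ y = -x := Iff.rfl

lemma infEDist_antipodalPair (x y : GeodesicSphere E) :
    infEDist x y.antipodalPair = min (edist x y) (edist x (-y)) := by
  rw [coe_antipodalPair, infEDist_union, infEDist_singleton, infEDist_singleton]

lemma infEDist_antipodalPair_of_mem {x y z : GeodesicSphere E} (hz : z ∈ x.antipodalPair) :
    infEDist z y.antipodalPair = min (edist x y) (edist x (-y)) := by
  rcases mem_antipodalPair.1 hz with rfl | rfl
  · exact infEDist_antipodalPair z y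
  · rw [infEDist_antipodalPair, edist_neg_left, edist_neg_left, neg_neg, min_comm]

lemma edist_antipodalPair (x y : GeodesicSphere E) :
    edist x.antipodalPair y.antipodalPair = min (edist x y) (edist x (-y)) := by
  apply le_antisymm
  · refine hausdorffEDist_le_of_infEDist (fun z hz ↦ (infEDist_antipodalPair_of_mem hz).le)
      fun z hz ↦ (infEDist_antipodalPair_of_mem hz).trans_le ?_
    rw [edist_comm y x, ← edist_neg_left, edist_comm (-y) x]
  · exact (infEDist_antipodalPair x y).ge.trans <|
      infEDist_le_hausdorffEDist_of_mem (mem_antipodalPair.2 (.inl rfl))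

lemma edist_antipodalPair_eq_arccos_inner (x y : GeodesicSphere E) :
    edist x.antipodalPair y.antipodalPair =
      ENNReal.ofReal (min (arccos ⟪x.val, y.val⟫) (π - arccos ⟪x.val, y.val⟫)) := by
  rw [edist_antipodalPair, edist_dist, edist_dist, dist_neg_right, dist_eq_arccos_inner,
    ENNReal.ofReal_min]

end GeodesicSphere

theorem one_dim_geodesic_lifting_general {α E : Type*} [LinearOrder α] [NormedAddCommGroup E]
    [InnerProductSpace ℝ E] (I : Set α) (m : α → E) (hm : ∀ t, ‖m t‖ = 1) :
    ∃ n : α → E, (∀ t, ‖n t‖ = 1) ∧ (∀ t, n t = m t ∨ n t = -m t) ∧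
      (⨆ (k : ℕ) (t : ℕ → α) (_ : Monotone t) (_ : ∀ i ≤ k, t i ∈ I),
        ∑ i ∈ Finset.range k, ENNReal.ofReal (arccos ⟪n (t (i + 1)), n (t i)⟫)) ≤
      ⨆ (k : ℕ) (t : ℕ → α) (_ : Monotone t) (_ : ∀ i ≤ k, t i ∈ I),
        ∑ i ∈ Finset.range k, ENNReal.ofReal
          (min (arccos ⟪m (t (i + 1)), m (t i)⟫) (π - arccos ⟪m (t (i + 1)), m (t i)⟫)) := by
  let line (t : α) : NonemptyCompacts (GeodesicSphere E) :=
    GeodesicSphere.antipodalPair ⟨m t, hm t⟩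
  obtain ⟨g, hg, hvar⟩ := exists_selection_eVariationOn_le line I
  refine ⟨fun t ↦ (g t).val, fun t ↦ (g t).norm_val, fun t ↦ ?_, ?_⟩
  · exact (GeodesicSphere.mem_antipodalPair.1 (hg t)).imp (congrArg GeodesicSphere.val)
      (congrArg GeodesicSphere.val)
  · simpa only [eVariationOn_eq_iSup_monotone, line, edist_dist (g _),
      GeodesicSphere.dist_eq_arccos_inner,
      GeodesicSphere.edist_antipodalPair_eq_arccos_inner] using hvar

theorem one_dim_geodesic_lifting
    (d : ℕ) (hd : 2 ≤ d)
    (I : Set ℝ) (hIopen : IsOpen I) (hIinterval : I.OrdConnected)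
    (m : ℝ → EuclideanSpace ℝ (Fin d)) (hm : ∀ t, ‖m t‖ = 1)
    (V : ℝ≥0∞)
    (hV : V = ⨆ (k : ℕ) (t : ℕ → ℝ) (_ : Monotone t) (_ : ∀ i ≤ k, t i ∈ I),
      ∑ i ∈ Finset.range k, ENNReal.ofReal
        (min (Real.arccos ⟪m (t (i + 1)), m (t i)⟫)
          (π - Real.arccos ⟪m (t (i + 1)), m (t i)⟫)))
    (hVfin : V ≠ ⊤) :
    ∃ n : ℝ → EuclideanSpace ℝ (Fin d),
      (∀ t, ‖n t‖ = 1) ∧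
      (∀ t ∈ I, n t = m t ∨ n t = -m t) ∧
      (⨆ (k : ℕ) (t : ℕ → ℝ) (_ : Monotone t) (_ : ∀ i ≤ k, t i ∈ I),
        ∑ i ∈ Finset.range k, ENNReal.ofReal (Real.arccos ⟪n (t (i + 1)), n (t i)⟫)) ≤ V := by
  obtain ⟨n, hnorm, hnm, hvar⟩ := one_dim_geodesic_lifting_general I m hm
  exact ⟨n, hnorm, fun t _ ↦ hnm t, hV ▸ hvar⟩
end
end

section
/- Let d ≥ 2. For all n, m ∈ S^{d-1}, setting θ = arccos⟪n, m⟫ ∈ [0, π], it holds ∫_{SO(d)} ‖F(Rn) − F(Rm)‖_{ℝ^d} dμ(R) = ((π−θ)/π)·‖n − m‖ + (θ/π)·‖n + m‖ = (2/π)·( (π−θ)·sin(θ/2) + θ·cos(θ/2) ). -/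
noncomputable section
open MeasureTheory Real Filter
open scoped ENNReal RealInnerProductSpace

instance {m n : Type*} : MeasurableSpace (Matrix m n ℝ) := MeasurableSpace.pi

/-- The special orthogonal group `SO(d)` as matrices. -/
abbrev SOd (d : ℕ) := Matrix.specialOrthogonalGroup (Fin d) ℝ

/-- The last coordinate `⟪x, e_d⟫` of a vector `x ∈ ℝ^d`. -/
def lastCoord {d : ℕ} (x : EuclideanSpace ℝ (Fin d)) : ℝ :=
  if h : 0 < d then x ⟨d - 1, Nat.sub_lt h Nat.one_pos⟩ else 0

/-- `F : S^{d-1} → S^{d-1}`, `F(x) = x` if `⟪x, e_d⟫ ≥ 0` and `F(x) = -x` otherwise. -/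
def Fsym {d : ℕ} (x : EuclideanSpace ℝ (Fin d)) : EuclideanSpace ℝ (Fin d)  :=
  if 0 ≤ lastCoord x then x else -x

/-- Action of a matrix on `ℝ^d` (Euclidean space) by matrix-vector multiplication. -/
def rotAct {d : ℕ} (R : Matrix (Fin d) (Fin d) ℝ) (x : EuclideanSpace ℝ (Fin d)) :
    EuclideanSpace ℝ (Fin d) :=
  (EuclideanSpace.equiv (Fin d) ℝ).symm (R.mulVec (EuclideanSpace.equiv (Fin d) ℝ x))

/-- Action of `R ∈ SO(d)` on `ℝ^d`. -/
def rot {d : ℕ} (R : SOd d) (x : EuclideanSpace ℝ (Fin d)) : EuclideanSpace ℝ (Fin d) :=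
  rotAct (R : Matrix (Fin d) (Fin d) ℝ) x

/-!
STATEMENT 6: the Euclidean average-distance formula from the proof of Theorem 4.1:
∫ ‖F(Rn) − F(Rm)‖ dμ(R) = ((π−θ)/π)‖n−m‖ + (θ/π)‖n+m‖ = (2/π)((π−θ)sin(θ/2) + θcos(θ/2)).
-/

/-!
Whenever neither `⟪R x, e_d⟫` nor `⟪R y, e_d⟫` vanishes, `‖F(R x) - F(R y)‖` is `‖x + y‖` if they
have opposite signs and `‖x - y‖` otherwise, so everything rests on the probability of opposite
signs. Since `⟪R x, e_d⟫ = ⟪x, R⁻¹ e_d⟫`, it is the probability that `x` and `y` are separated by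
the hyperplane orthogonal to the random vector `R⁻¹ e_d`, whose law is rotation invariant.

By invariance this probability does not change when `x` and `y` are rotated by a common angle `φ`
in the plane they span, so it may be averaged over `φ ∈ (0, π]`. For a fixed vector `v` not
orthogonal to that plane, the two inner products are, up to a common factor, `cos (φ - α)` and
`cos (φ + θ - α)`, which have opposite signs on a set of angles of length `θ`. Fubini gives `θ / π`.
-/

section Geometry

open InnerProductGeometry

variable {E : Type*} [NormedAddCommGroup E] [InnerProductSpace ℝ E]

/-- The point at angle `φ` on the unit circle of the plane spanned by an orthonormal pair `u, w`. -/
def circlePoint (u w : E) (φ : ℝ) : E :=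
  cos φ • u + sin φ • w

lemma inner_circlePoint_left (u w v : E) (φ : ℝ) :
    ⟪circlePoint u w φ, v⟫ = cos φ * ⟪u, v⟫ + sin φ * ⟪w, v⟫ := by
  simp [circlePoint, inner_add_left, real_inner_smul_left]

lemma inner_circlePoint_circlePoint {u w : E} (hu : ‖u‖ = 1) (hw : ‖w‖ = 1) (huw : ⟪u, w⟫ = 0)
    (φ ψ : ℝ) : ⟪circlePoint u w φ, circlePoint u w ψ⟫ = cos (φ - ψ) := by
  rw [inner_circlePoint_left]
  simp [circlePoint, inner_add_right, real_inner_smul_right, hu, hw, huw, real_inner_comm u w,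
    cos_sub]

lemma norm_circlePoint {u w : E} (hu : ‖u‖ = 1) (hw : ‖w‖ = 1) (huw : ⟪u, w⟫ = 0) (φ : ℝ) :
    ‖circlePoint u w φ‖ = 1 := by
  rw [norm_eq_sqrt_real_inner, inner_circlePoint_circlePoint hu hw huw, sub_self, cos_zero,
    sqrt_one]

lemma reflection_circlePoint {u w : E} (hu : ‖u‖ = 1) (hw : ‖w‖ = 1) (huw : ⟪u, w⟫ = 0)
    (α δ : ℝ) :
    (ℝ ∙ circlePoint u w α)ᗮ.reflection (circlePoint u w (α - δ)) = -circlePoint u w (α + δ) := by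
  rw [Submodule.reflection_orthogonal_apply, Submodule.reflection_singleton_apply,
    norm_circlePoint hu hw huw, inner_circlePoint_circlePoint hu hw huw, sub_sub_cancel]
  simp only [circlePoint, cos_add, sin_add, cos_sub, sin_sub, RCLike.ofReal_one, one_pow, div_one]
  module

lemma det_reflection_orthogonal_singleton [FiniteDimensional ℝ E] {v : E} (hv : v ≠ 0) :
    LinearMap.det (ℝ ∙ v)ᗮ.reflection.toLinearMap = -1 := by
  rw [Submodule.det_reflection, Submodule.orthogonal_orthogonal, finrank_span_singleton hv, pow_one]

lemma exists_rotation_circlePoint [FiniteDimensional ℝ E] {u w : E} (hu : ‖u‖ = 1) (hw : ‖w‖ = 1)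
    (huw : ⟪u, w⟫ = 0) (φ : ℝ) :
    ∃ T : E ≃ₗᵢ[ℝ] E, LinearMap.det T.toLinearMap = 1 ∧
      ∀ ψ, T (circlePoint u w ψ) = circlePoint u w (ψ + φ) := by
  have ne_zero (α : ℝ) : circlePoint u w α ≠ 0 :=
    norm_ne_zero_iff.1 <| by simp [norm_circlePoint hu hw huw]
  refine ⟨(ℝ ∙ circlePoint u w 0)ᗮ.reflection.trans (ℝ ∙ circlePoint u w (φ / 2))ᗮ.reflection,
    ?_, fun ψ ↦ ?_⟩
  · change LinearMap.det (_ ∘ₗ _) = 1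
    rw [LinearMap.det_comp]
    simp [det_reflection_orthogonal_singleton (ne_zero _)]
  · have first := reflection_circlePoint hu hw huw 0 (-ψ)
    have second := reflection_circlePoint hu hw huw (φ / 2) (φ / 2 + ψ)
    rw [sub_neg_eq_add, zero_add, zero_add] at first
    rw [sub_add_cancel_left, ← add_assoc, add_halves, add_comm φ] at second
    rw [LinearIsometryEquiv.trans_apply, first, map_neg, second, neg_neg]

lemma exists_mem_norm_eq_one_norm_smul_eq {K : Submodule ℝ E} (hK : K ≠ ⊥) {z : E} (hz : z ∈ K) :
    ∃ w ∈ K, ‖w‖ = 1 ∧ ‖z‖ • w = z := by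
  obtain ⟨y, hyK, hy, hzy⟩ : ∃ y ∈ K, y ≠ 0 ∧ ‖z‖ • y = ‖y‖ • z := by
    by_cases hz0 : z = 0
    · obtain ⟨y, hyK, hy⟩ := Submodule.exists_mem_ne_zero_of_ne_bot hK
      exact ⟨y, hyK, hy, by simp [hz0]⟩
    · exact ⟨z, hz, hz0, rfl⟩
  exact ⟨NormedSpace.normalize y, K.smul_mem _ hyK, NormedSpace.norm_normalize hy, by
    rw [NormedSpace.normalize, smul_comm, hzy, inv_smul_smul₀ (norm_ne_zero_iff.2 hy)]⟩

lemma orthogonal_span_singleton_ne_bot [FiniteDimensional ℝ E]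
    (hE : 2 ≤ Module.finrank ℝ E) (x : E) : (ℝ ∙ x)ᗮ ≠ ⊥ := by
  intro h
  have finrank_le : Module.finrank ℝ (ℝ ∙ x) ≤ 1 := by simpa using finrank_span_le_card {x}
  rw [Submodule.orthogonal_eq_bot_iff.1 h, finrank_top] at finrank_le
  lia

lemma exists_eq_norm_smul_circlePoint_angle [FiniteDimensional ℝ E] (hE : 2 ≤ Module.finrank ℝ E)
    {x : E} (hx : ‖x‖ = 1) (y : E) :
    ∃ w : E, ‖w‖ = 1 ∧ ⟪x, w⟫ = 0 ∧ y = ‖y‖ • circlePoint x w (angle x y) := by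
  have cos_eq : ‖y‖ * cos (angle x y) = ⟪x, y⟫ := by
    rw [← cos_angle_mul_norm_mul_norm, hx]; ring
  have hz : y - ⟪x, y⟫ • x ∈ (ℝ ∙ x)ᗮ := by
    simp [Submodule.mem_orthogonal_singleton_iff_inner_right, inner_sub_right,
      real_inner_smul_right, hx]
  have sin_eq : ‖y‖ * sin (angle x y) = ‖y - ⟪x, y⟫ • x‖ := by
    refine (sq_eq_sq₀ (mul_nonneg (norm_nonneg _) (sin_angle_nonneg _ _)) (norm_nonneg _)).1 ?_
    rw [mul_pow, sin_sq, norm_sub_sq_real, real_inner_smul_right, norm_smul, hx,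
      real_inner_comm x y, ← cos_eq, norm_eq_abs, mul_one, sq_abs]
    ring
  obtain ⟨w, hw, hw_norm, hzw⟩ :=
    exists_mem_norm_eq_one_norm_smul_eq (orthogonal_span_singleton_ne_bot hE x) hz
  refine ⟨w, hw_norm, Submodule.mem_orthogonal_singleton_iff_inner_right.1 hw, ?_⟩
  rw [circlePoint, smul_add, smul_smul, smul_smul, cos_eq, sin_eq, hzw, add_sub_cancel]

lemma exists_rotation_apply_eq [FiniteDimensional ℝ E] (hE : 2 ≤ Module.finrank ℝ E) {x y : E}
    (hx : ‖x‖ = 1) (hy : ‖y‖ = 1) :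
    ∃ T : E ≃ₗᵢ[ℝ] E, LinearMap.det T.toLinearMap = 1 ∧ T x = y := by
  obtain ⟨w, hw, hxw, hyw⟩ := exists_eq_norm_smul_circlePoint_angle hE hx y
  obtain ⟨T, hT, hTx⟩ := exists_rotation_circlePoint hx hw hxw (angle x y)
  refine ⟨T, hT, ?_⟩
  simpa [circlePoint, hy] using (hTx 0).trans (by simpa [hy] using hyw.symm)

lemma norm_sub_eq_two_mul_sin_half_angle {x y : E} (hx : ‖x‖ = 1) (hy : ‖y‖ = 1) :
    ‖x - y‖ = 2 * sin (angle x y / 2) := by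
  have sin_nonneg : 0 ≤ sin (angle x y / 2) :=
    sin_nonneg_of_nonneg_of_le_pi (by linarith [angle_nonneg x y])
      (by linarith [angle_le_pi x y, pi_pos])
  rw [← sq_eq_sq₀ (norm_nonneg _) (by positivity), norm_sub_sq_real, hx, hy,
    inner_eq_cos_angle_of_norm_eq_one hx hy, mul_pow, sin_sq_eq_half_sub,
    mul_div_cancel₀ _ two_ne_zero]
  ring

lemma norm_add_eq_two_mul_cos_half_angle {x y : E} (hx : ‖x‖ = 1) (hy : ‖y‖ = 1) :
    ‖x + y‖ = 2 * cos (angle x y / 2) := by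
  rw [← sub_neg_eq_add, norm_sub_eq_two_mul_sin_half_angle hx (by rwa [norm_neg]), angle_neg_right,
    sub_div, sin_pi_div_two_sub]

end Geometry

section Circle

lemma mul_neg_iff_of_pos_left {α : Type*} [MulZeroClass α] [Preorder α] [PosMulStrictMono α]
    [PosMulReflectLT α] {a b : α} (ha : 0 < a) : a * b < 0 ↔ b < 0 :=
  smul_neg_iff_of_pos_left ha

lemma volume_inter_Ioc_add_of_periodic {s : Set ℝ} {T : ℝ} (hT : 0 < T) (hs : MeasurableSet s)
    (h : Function.Periodic (· ∈ s) T) (a b : ℝ) :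
    volume (s ∩ Set.Ioc a (a + T)) = volume (s ∩ Set.Ioc b (b + T)) := by
  have : VAddInvariantMeasure (AddSubgroup.zmultiples T) ℝ volume :=
    ⟨fun _ _ _ ↦ measure_preimage_add _ _ _⟩
  exact (isAddFundamentalDomain_Ioc hT a).measure_set_eq (isAddFundamentalDomain_Ioc hT b) hs
    fun g ↦ Set.ext fun x ↦ iff_of_eq (h.map_vadd_zmultiples g x)

lemma cos_mul_cos_add_neg_iff {θ : ℝ} (hθ : θ ∈ Set.Icc 0 π) {x : ℝ}
    (hx : x ∈ Set.Ioc (-(π / 2)) (π / 2)) :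
    cos x * cos (x + θ) < 0 ↔ x ∈ Set.Ioo (π / 2 - θ) (π / 2) := by
  obtain ⟨hθ₀, hθπ⟩ := hθ
  obtain ⟨hx₁, hx₂⟩ := hx
  rcases hx₂.eq_or_lt with rfl | hx₂
  · simp
  have cos_pos : 0 < cos x := cos_pos_of_mem_Ioo ⟨hx₁, hx₂⟩
  rw [mul_neg_iff_of_pos_left cos_pos]
  refine ⟨fun h ↦ ⟨?_, hx₂⟩, fun h ↦
    cos_neg_of_pi_div_two_lt_of_lt (by linarith [h.1]) (by linarith)⟩
  by_contra! hx
  exact h.not_ge (cos_nonneg_of_mem_Icc ⟨by linarith, by linarith⟩)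

lemma volume_cos_sub_mul_cos_sub_add_neg {θ : ℝ} (hθ : θ ∈ Set.Icc 0 π) (α : ℝ) :
    volume ({φ | cos (φ - α) * cos (φ + θ - α) < 0} ∩ Set.Ioc 0 π) = ENNReal.ofReal θ := by
  set s := {φ | cos (φ - α) * cos (φ + θ - α) < 0}
  have hs : MeasurableSet s := measurableSet_lt (by fun_prop) (by fun_prop)
  have periodic : Function.Periodic (· ∈ s) π := fun φ ↦ by
    simp only [s, Set.mem_ofPred_eq, add_right_comm φ π θ, add_sub_right_comm _ π α, cos_add_pi,
      neg_mul_neg]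
  have inter_eq : s ∩ Set.Ioc (α - π / 2) (α - π / 2 + π) =
      Set.Ioo (α + π / 2 - θ) (α + π / 2) := by
    ext φ
    have mem_iff := cos_mul_cos_add_neg_iff hθ (x := φ - α)
    simp only [s, Set.mem_inter_iff, Set.mem_ofPred_eq, Set.mem_Ioc, Set.mem_Ioo,
      add_sub_right_comm φ θ α] at mem_iff ⊢
    grind
  rw [← zero_add π, volume_inter_Ioc_add_of_periodic pi_pos hs periodic 0 (α - π / 2),
    inter_eq, Real.volume_Ioo, sub_sub_cancel]

lemma exists_cos_mul_add_sin_mul_eq (a b : ℝ) :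
    ∃ r α : ℝ, ∀ φ, cos φ * a + sin φ * b = r * cos (φ - α) := by
  refine ⟨‖(⟨a, b⟩ : ℂ)‖, Complex.arg ⟨a, b⟩, fun φ ↦ ?_⟩
  rw [cos_sub, mul_add, mul_left_comm, mul_left_comm _ (sin φ), Complex.norm_mul_cos_arg,
    Complex.norm_mul_sin_arg]

lemma volume_cos_sin_combination_mul_neg {θ : ℝ} (hθ : θ ∈ Set.Icc 0 π) {a b : ℝ}
    (hab : a ≠ 0 ∨ b ≠ 0) :
    volume ({φ | (cos φ * a + sin φ * b) * (cos (φ + θ) * a + sin (φ + θ) * b) < 0} ∩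
      Set.Ioc 0 π) = ENNReal.ofReal θ := by
  obtain ⟨r, α, hr⟩ := exists_cos_mul_add_sin_mul_eq a b
  have hr0 : r ≠ 0 := by
    rintro rfl
    have ha : a = 0 := by simpa using hr 0
    have hb : b = 0 := by simpa using hr (π / 2)
    exact hab.elim (· ha) (· hb)
  rw [← volume_cos_sub_mul_cos_sub_add_neg hθ α]
  simp only [hr, mul_mul_mul_comm r, mul_neg_iff_of_pos_left (mul_self_pos.2 hr0)]

end Circle

section RotationInvariance

open InnerProductGeometry

variable {E : Type*} [NormedAddCommGroup E] [InnerProductSpace ℝ E] [FiniteDimensional ℝ E]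
  [MeasurableSpace E]

/-- Invariance under every linear isometry of determinant one, the action of `SO(E)`. -/
def IsRotationInvariant (ν : Measure E) : Prop :=
  ∀ T : E ≃ₗᵢ[ℝ] E, LinearMap.det T.toLinearMap = 1 → MeasurePreserving T ν ν

variable [BorelSpace E] {ν : Measure E}

lemma ae_volume_inner_ne_zero {v : E} (hv : v ≠ 0) : ∀ᵐ x : E, ⟪x, v⟫ ≠ 0 := by
  have hker : (ℝ ∙ v)ᗮ ≠ ⊤ := by simpa using hv
  filter_upwards [measure_eq_zero_iff_ae_notMem.1 (Measure.addHaar_submodule volume _ hker)]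
    with x hx
  rwa [SetLike.mem_coe, Submodule.mem_orthogonal_singleton_iff_inner_left] at hx

lemma IsRotationInvariant.measure_inner_circlePoint_mul_neg (hν : IsRotationInvariant ν)
    {u w : E} (hu : ‖u‖ = 1) (hw : ‖w‖ = 1) (huw : ⟪u, w⟫ = 0) (θ φ : ℝ) :
    ν {v | ⟪circlePoint u w φ, v⟫ * ⟪circlePoint u w (φ + θ), v⟫ < 0} =
      ν {v | ⟪u, v⟫ * ⟪circlePoint u w θ, v⟫ < 0} := by
  obtain ⟨T, hT, hTψ⟩ := exists_rotation_circlePoint hu hw huw φ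
  have hTu : T u = circlePoint u w φ := by simpa [circlePoint] using hTψ 0
  rw [← (hν T hT).measure_preimage_equiv (f := T.toHomeomorph.toMeasurableEquiv)]
  congr 1 with v
  simp [← hTu, add_comm φ θ, ← hTψ]

variable [SFinite ν]

lemma IsRotationInvariant.ae_inner_ne_zero (hE : 2 ≤ Module.finrank ℝ E)
    (hν : IsRotationInvariant ν) (hν₀ : ∀ᵐ v ∂ν, v ≠ 0) {x : E} (hx : x ≠ 0) :
    ∀ᵐ v ∂ν, ⟪x, v⟫ ≠ 0 := by
  -- By Fubini the claim holds for Lebesgue-almost every direction, and a rotation takes `x` to one.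
  have : Nontrivial E := ⟨x, 0, hx⟩
  have generic : ∀ᵐ y : E, ∀ᵐ v ∂ν, ⟪y, v⟫ ≠ 0 := by
    refine (Measure.ae_ae_comm (measurableSet_eq_fun (by fun_prop) (by fun_prop)).compl).2 ?_
    filter_upwards [hν₀] with v hv using ae_volume_inner_ne_zero hv
  obtain ⟨y, hyv, hy⟩ := (generic.and (Measure.ae_ne volume 0)).exists
  obtain ⟨T, hT, hTx⟩ := exists_rotation_apply_eq hE (NormedSpace.norm_normalize hx)
    (NormedSpace.norm_normalize hy)
  filter_upwards [(hν T hT).quasiMeasurePreserving.ae hyv] with v hv hxv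
  refine hv ?_
  rw [← NormedSpace.norm_smul_normalize y, ← hTx, real_inner_smul_left,
    LinearIsometryEquiv.inner_map_map, NormedSpace.normalize, real_inner_smul_left, hxv, mul_zero,
    mul_zero]

lemma IsRotationInvariant.measure_inner_mul_inner_circlePoint_neg (hν : IsRotationInvariant ν)
    {u w : E} (hu : ‖u‖ = 1) (hw : ‖w‖ = 1) (huw : ⟪u, w⟫ = 0) (hν_u : ∀ᵐ v ∂ν, ⟪u, v⟫ ≠ 0)
    {θ : ℝ} (hθ : θ ∈ Set.Icc 0 π) :
    ν {v | ⟪u, v⟫ * ⟪circlePoint u w θ, v⟫ < 0} = ENNReal.ofReal (θ / π) * ν Set.univ := by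
  set s : Set (E × ℝ) :=
    {p | ⟪circlePoint u w p.2, p.1⟫ * ⟪circlePoint u w (p.2 + θ), p.1⟫ < 0}
  have hs : MeasurableSet s := by
    simp only [s, inner_circlePoint_left]
    exact measurableSet_lt (by fun_prop) measurable_const
  have slice_vector : ∀ᵐ v ∂ν, volume.restrict (Set.Ioc 0 π) (Prod.mk v ⁻¹' s) =
      ENNReal.ofReal θ := by
    filter_upwards [hν_u] with v hv
    rw [Measure.restrict_apply (measurable_prodMk_left hs),
      ← volume_cos_sin_combination_mul_neg hθ (.inl hv) (b := ⟪w, v⟫)]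
    simp only [s, inner_circlePoint_left, Set.preimage_ofPred_eq]
  have slice_angle (φ : ℝ) : ν ((·, φ) ⁻¹' s) = ν {v | ⟪u, v⟫ * ⟪circlePoint u w θ, v⟫ < 0} :=
    hν.measure_inner_circlePoint_mul_neg hu hw huw θ φ
  have double_count : ν {v | ⟪u, v⟫ * ⟪circlePoint u w θ, v⟫ < 0} * ENNReal.ofReal π =
      ENNReal.ofReal θ * ν Set.univ :=
    calc
      _ = ν.prod (volume.restrict (Set.Ioc 0 π)) s := by
        simp [Measure.prod_apply_symm hs, slice_angle]
      _ = _ := by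
        rw [Measure.prod_apply hs, lintegral_congr_ae slice_vector, lintegral_const]
  rw [ENNReal.ofReal_div_of_pos pi_pos, ← ENNReal.mul_div_right_comm, ← double_count,
    ENNReal.mul_div_cancel_right (by simp [pi_pos]) ENNReal.ofReal_ne_top]

theorem IsRotationInvariant.measure_inner_mul_inner_neg (hE : 2 ≤ Module.finrank ℝ E)
    (hν : IsRotationInvariant ν) (hν₀ : ∀ᵐ v ∂ν, v ≠ 0) {x y : E} (hx : x ≠ 0) (hy : y ≠ 0) :
    ν {v | ⟪x, v⟫ * ⟪y, v⟫ < 0} = ENNReal.ofReal (angle x y / π) * ν Set.univ := by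
  set u := NormedSpace.normalize x
  have hu : ‖u‖ = 1 := NormedSpace.norm_normalize hx
  obtain ⟨w, hw, huw, hyw⟩ := exists_eq_norm_smul_circlePoint_angle hE hu y
  rw [angle_normalize_left] at hyw
  rw [← hν.measure_inner_mul_inner_circlePoint_neg hu hw huw
    (hν.ae_inner_ne_zero hE hν₀ (norm_ne_zero_iff.1 (by simp [hu])))
    ⟨angle_nonneg x y, angle_le_pi x y⟩]
  congr 1 with v
  have inner_x : ⟪x, v⟫ = ‖x‖ * ⟪u, v⟫ := by
    rw [← real_inner_smul_left, NormedSpace.norm_smul_normalize]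
  have inner_y : ⟪y, v⟫ = ‖y‖ * ⟪circlePoint u w (angle x y), v⟫ := by
    rw [← real_inner_smul_left, ← hyw]
  rw [Set.mem_ofPred_eq, inner_x, inner_y, mul_mul_mul_comm,
    mul_neg_iff_of_pos_left (mul_pos (norm_pos_iff.2 hx) (norm_pos_iff.2 hy)), Set.mem_ofPred_eq]

end RotationInvariance

lemma lintegral_ofReal_ite {Ω : Type*} [MeasurableSpace Ω] {μ : Measure Ω}
    [IsProbabilityMeasure μ] {P : Ω → Prop} [DecidablePred P] (hP : MeasurableSet {ω | P ω})
    {p a b : ℝ} (hp : p ∈ Set.Icc 0 1) (hμ : μ {ω | P ω} = ENNReal.ofReal p) (ha : 0 ≤ a)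
    (hb : 0 ≤ b) :
    ∫⁻ ω, ENNReal.ofReal (if P ω then a else b) ∂μ = ENNReal.ofReal ((1 - p) * b + p * a) := by
  have hp' : 0 ≤ 1 - p := sub_nonneg.2 hp.2
  have hμ_compl : μ {ω | P ω}ᶜ = ENNReal.ofReal (1 - p) := by
    rw [prob_compl_eq_one_sub hP, hμ, ENNReal.ofReal_sub _ hp.1, ENNReal.ofReal_one]
  rw [← lintegral_add_compl _ hP,
    setLIntegral_congr_fun (g := fun _ ↦ ENNReal.ofReal a) hP fun ω (hω : P ω) ↦ by simp [hω],
    setLIntegral_congr_fun (g := fun _ ↦ ENNReal.ofReal b) hP.compl fun ω (hω : ¬P ω) ↦ by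
      simp [hω],
    setLIntegral_const, setLIntegral_const, hμ, hμ_compl, ← ENNReal.ofReal_mul ha,
    ← ENNReal.ofReal_mul hb, ← ENNReal.ofReal_add (mul_nonneg ha hp.1) (mul_nonneg hb hp'),
    add_comm, mul_comm b, mul_comm a]

section SpecialOrthogonal

open InnerProductGeometry

instance {m n : Type*} [Countable m] [Countable n] : BorelSpace (Matrix m n ℝ) :=
  inferInstanceAs (BorelSpace (m → n → ℝ))

variable {d : ℕ}

/-- The isometry `x ↦ R x` of Euclidean space, as a homomorphism in `R ∈ SO(d)`. -/
def rotIsometry (d : ℕ) : SOd d →* (EuclideanSpace ℝ (Fin d) ≃ₗᵢ[ℝ] EuclideanSpace ℝ (Fin d)) :=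
  (Unitary.linearIsometryEquiv.toMonoidHom.comp
    (Unitary.map (.mk (Matrix.toEuclideanCLM (n := Fin d) (𝕜 := ℝ)) (map_star _))).toMonoidHom).comp
      (Submonoid.inclusion Matrix.specialUnitaryGroup_le_unitaryGroup)

lemma rotIsometry_apply (R : SOd d) (x : EuclideanSpace ℝ (Fin d)) :
    rotIsometry d R x = rot R x :=
  rfl

lemma exists_rotIsometry_eq {T : EuclideanSpace ℝ (Fin d) ≃ₗᵢ[ℝ] EuclideanSpace ℝ (Fin d)}
    (hT : LinearMap.det T.toLinearMap = 1) : ∃ R, rotIsometry d R = T := by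
  let b := EuclideanSpace.basisFun (Fin d) ℝ
  refine ⟨⟨LinearMap.toMatrix b.toBasis b.toBasis T.toLinearMap,
    Matrix.mem_specialOrthogonalGroup_iff.2 ⟨T.toMatrix_mem_unitaryGroup b b, ?_⟩⟩, ?_⟩
  · rw [LinearMap.det_toMatrix, hT]
  · ext1 x
    exact DFunLike.congr_fun (Matrix.toLin_toMatrix b.toBasis b.toBasis T.toLinearMap) x

lemma inner_rotIsometry_inv (R : SOd d) (x e : EuclideanSpace ℝ (Fin d)) :
    ⟪x, rotIsometry d R⁻¹ e⟫ = ⟪rot R x, e⟫ := by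
  rw [← rotIsometry_apply, map_inv, ← (rotIsometry d R).inner_map_map]
  simp

lemma measurable_rotIsometry_inv (e : EuclideanSpace ℝ (Fin d)) :
    Measurable fun R : SOd d ↦ rotIsometry d R⁻¹ e := by
  have continuous_star_mulVec : Continuous fun R : SOd d ↦
      WithLp.toLp 2 ((star (R : Matrix (Fin d) (Fin d) ℝ)).mulVec e.ofLp) := by
    fun_prop
  exact continuous_star_mulVec.measurable

section RightInvariant

variable (μ : Measure (SOd d))

lemma isRotationInvariant_map_rotIsometry_inv [μ.IsMulRightInvariant]
    (e : EuclideanSpace ℝ (Fin d)) :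
    IsRotationInvariant (μ.map fun R ↦ rotIsometry d R⁻¹ e) := by
  intro T hT
  obtain ⟨S, rfl⟩ := exists_rotIsometry_eq hT
  have comp_eq : rotIsometry d S ∘ (fun R ↦ rotIsometry d R⁻¹ e) =
      (fun R ↦ rotIsometry d R⁻¹ e) ∘ (· * S⁻¹) := by
    ext1 R
    simp only [Function.comp_apply, mul_inv_rev, inv_inv, map_mul, LinearIsometryEquiv.coe_mul]
  refine ⟨(rotIsometry d S).continuous.measurable, ?_⟩
  rw [Measure.map_map (rotIsometry d S).continuous.measurable (measurable_rotIsometry_inv e),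
    comp_eq, ← Measure.map_map (measurable_rotIsometry_inv e) (measurable_mul_const _),
    map_mul_right_eq_self]

variable {e x y : EuclideanSpace ℝ (Fin d)}

lemma ae_map_rotIsometry_inv_ne_zero (he : e ≠ 0) :
    ∀ᵐ v ∂μ.map fun R ↦ rotIsometry d R⁻¹ e, v ≠ 0 :=
  (ae_map_iff (measurable_rotIsometry_inv e).aemeasurable (measurableSet_singleton 0).compl).2 <|
    .of_forall fun _ ↦ (map_ne_zero_iff _ (LinearIsometryEquiv.injective _)).2 he

variable [μ.IsMulRightInvariant] [SFinite μ]

lemma ae_inner_rot_ne_zero (hd : 2 ≤ d) (he : e ≠ 0) (hx : x ≠ 0) :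
    ∀ᵐ R ∂μ, ⟪rot R x, e⟫ ≠ 0 := by
  have ae_ne := (isRotationInvariant_map_rotIsometry_inv μ e).ae_inner_ne_zero (by simpa)
    (ae_map_rotIsometry_inv_ne_zero μ he) hx
  simpa only [inner_rotIsometry_inv] using
    ae_of_ae_map (measurable_rotIsometry_inv e).aemeasurable ae_ne

lemma measure_inner_rot_mul_inner_rot_neg (hd : 2 ≤ d) (he : e ≠ 0) (hx : x ≠ 0) (hy : y ≠ 0) :
    μ {R | ⟪rot R x, e⟫ * ⟪rot R y, e⟫ < 0} = ENNReal.ofReal (angle x y / π) * μ Set.univ := by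
  have map_eq := (isRotationInvariant_map_rotIsometry_inv μ e).measure_inner_mul_inner_neg
    (by simpa) (ae_map_rotIsometry_inv_ne_zero μ he) hx hy
  rw [Measure.map_apply (measurable_rotIsometry_inv e)
      (measurableSet_lt (by fun_prop) measurable_const),
    Measure.map_apply (measurable_rotIsometry_inv e) .univ, Set.preimage_univ] at map_eq
  simpa only [Set.preimage_ofPred_eq, inner_rotIsometry_inv] using map_eq

end RightInvariant

lemma exists_lastCoord_eq_inner (hd : 0 < d) :
    ∃ e : EuclideanSpace ℝ (Fin d), e ≠ 0 ∧ ∀ x, lastCoord x = ⟪x, e⟫ :=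
  ⟨EuclideanSpace.single ⟨d - 1, Nat.sub_lt hd Nat.one_pos⟩ 1, by simp, fun x ↦ by
    simp [lastCoord, hd, EuclideanSpace.inner_single_right]⟩

lemma norm_Fsym_sub_Fsym {x y : EuclideanSpace ℝ (Fin d)} (hx : lastCoord x ≠ 0)
    (hy : lastCoord y ≠ 0) :
    ‖Fsym x - Fsym y‖ = if lastCoord x * lastCoord y < 0 then ‖x + y‖ else ‖x - y‖ := by
  rcases hx.lt_or_gt with hx | hx <;> rcases hy.lt_or_gt with hy | hy
  · simp [Fsym, hx.not_ge, hy.not_ge, (mul_pos_of_neg_of_neg hx hy).le.not_gt, neg_add_eq_sub,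
      norm_sub_rev]
  · simp [Fsym, hx.not_ge, hy.le, mul_neg_of_neg_of_pos hx hy, ← neg_add', norm_neg, -neg_add_rev]
  · simp [Fsym, hx.le, hy.not_ge, mul_neg_of_pos_of_neg hx hy]
  · simp [Fsym, hx.le, hy.le, (mul_pos hx hy).le.not_gt]

lemma norm_Fsym_rot_sub_Fsym_rot {R : SOd d} {x y : EuclideanSpace ℝ (Fin d)}
    (hx : lastCoord (rot R x) ≠ 0) (hy : lastCoord (rot R y) ≠ 0) :
    ‖Fsym (rot R x) - Fsym (rot R y)‖ =
      if lastCoord (rot R x) * lastCoord (rot R y) < 0 then ‖x + y‖ else ‖x - y‖ := by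
  rw [norm_Fsym_sub_Fsym hx hy, ← (rotIsometry d R).norm_map (x + y),
    ← (rotIsometry d R).norm_map (x - y), map_add, map_sub]
  simp only [rotIsometry_apply]

theorem lintegral_norm_Fsym_rot_sub_Fsym_rot (μ : Measure (SOd d)) [μ.IsMulRightInvariant]
    [IsProbabilityMeasure μ] (hd : 2 ≤ d) {x y : EuclideanSpace ℝ (Fin d)} (hx : x ≠ 0)
    (hy : y ≠ 0) :
    ∫⁻ R, ENNReal.ofReal ‖Fsym (rot R x) - Fsym (rot R y)‖ ∂μ =
      ENNReal.ofReal ((π - angle x y) / π * ‖x - y‖ + angle x y / π * ‖x + y‖) := by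
  obtain ⟨e, he, lastCoord_eq⟩ := exists_lastCoord_eq_inner (d := d) (by lia)
  have ae_eq : ∀ᵐ R ∂μ, ENNReal.ofReal ‖Fsym (rot R x) - Fsym (rot R y)‖ =
      ENNReal.ofReal (if ⟪rot R x, e⟫ * ⟪rot R y, e⟫ < 0 then ‖x + y‖ else ‖x - y‖) := by
    filter_upwards [ae_inner_rot_ne_zero μ hd he hx, ae_inner_rot_ne_zero μ hd he hy] with R hRx hRy
    rw [← lastCoord_eq] at hRx hRy
    simp only [norm_Fsym_rot_sub_Fsym_rot hRx hRy, lastCoord_eq]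
  have hmeas : MeasurableSet {R : SOd d | ⟪rot R x, e⟫ * ⟪rot R y, e⟫ < 0} := by
    have measurable_inv := measurable_rotIsometry_inv e
    simp only [← inner_rotIsometry_inv]
    exact measurableSet_lt (by fun_prop) measurable_const
  rw [lintegral_congr_ae ae_eq, lintegral_ofReal_ite hmeas
    ⟨div_nonneg (angle_nonneg x y) pi_pos.le, div_le_one_of_le₀ (angle_le_pi x y) pi_pos.le⟩
    (by rw [measure_inner_rot_mul_inner_rot_neg μ hd he hx hy, measure_univ, mul_one])
    (norm_nonneg _) (norm_nonneg _), sub_div, div_self pi_ne_zero]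

end SpecialOrthogonal

theorem average_euclidean_distance
    (d : ℕ) (hd : 2 ≤ d)
    (μ : Measure (SOd d)) [IsProbabilityMeasure μ]
    (hμleft : ∀ R₀ : SOd d, μ.map (fun R => R₀ * R) = μ)
    (hμright : ∀ R₀ : SOd d, μ.map (fun R => R * R₀) = μ)
    (n m : EuclideanSpace ℝ (Fin d)) (hn : ‖n‖ = 1) (hm : ‖m‖ = 1) :
    (∫⁻ R, ENNReal.ofReal ‖Fsym (rot R n) - Fsym (rot R m)‖ ∂μ =
      ENNReal.ofReal ((π - Real.arccos ⟪n, m⟫) / π * ‖n - m‖ +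
        Real.arccos ⟪n, m⟫ / π * ‖n + m‖)) ∧
    (π - Real.arccos ⟪n, m⟫) / π * ‖n - m‖ + Real.arccos ⟪n, m⟫ / π * ‖n + m‖ =
      2 / π * ((π - Real.arccos ⟪n, m⟫) * Real.sin (Real.arccos ⟪n, m⟫ / 2) +
        Real.arccos ⟪n, m⟫ * Real.cos (Real.arccos ⟪n, m⟫ / 2)) := by
  have : μ.IsMulRightInvariant := ⟨hμright⟩
  have angle_eq : arccos ⟪n, m⟫ = InnerProductGeometry.angle n m := by
    simp [InnerProductGeometry.angle, hn, hm]
  have n_ne_zero : n ≠ 0 := norm_ne_zero_iff.1 (by simp [hn])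
  have m_ne_zero : m ≠ 0 := norm_ne_zero_iff.1 (by simp [hm])
  rw [angle_eq]
  refine ⟨lintegral_norm_Fsym_rot_sub_Fsym_rot μ hd n_ne_zero m_ne_zero, ?_⟩
  rw [norm_sub_eq_two_mul_sin_half_angle hn hm, norm_add_eq_two_mul_cos_half_angle hn hm]
  ring
end
end
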